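/- arXiv:2111.15497 — 2 statements merged into one kernel-verified Lean document; each statement's English description precedes it below -/
import Mathlib

section
/- Let Λ : ℝ → ℝ^d be C¹ and exponentially bi-asymptotically constant with decay coefficient ρ > 0, and suppose Λ(τ) → λ⁺ as τ → +∞ and Λ(τ) → λ⁻ as τ → −∞. Then for every α ∈ (0, ρ], the function Λ_α : [−1,1] → ℝ^d, defined by Λ_α(s) = Λ(h_α(s)) for s ∈ (−1,1), Λ_α(1) = λ⁺ and Λ_α(−1) = λ⁻, is continuously differentiable on the closed interval [−1,1]. -/
open Filter Topology

/-- The time compactification map `g_α(τ) = tanh(ατ/2)`. -/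
noncomputable def gcomp (α τ : ℝ) : ℝ := Real.tanh (α * τ / 2)

/-- Its inverse `h_α(s) = (1/α)·ln((1+s)/(1-s))`. -/
noncomputable def hcomp (α s : ℝ) : ℝ := (1 / α) * Real.log ((1 + s) / (1 - s))

/-- `Λ : ℝ → ℝ^d` is exponentially bi-asymptotically constant with decay coefficient `ρ`:
both limits `lim_{τ→+∞} Λ'(τ)·e^{ρτ}` and `lim_{τ→-∞} Λ'(τ)·e^{-ρτ}` exist. -/
def ExpBiAsympConst {d : ℕ} (Λ : ℝ → Fin d → ℝ) (ρ : ℝ) : Prop :=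
  (∃ Lp : Fin d → ℝ, Tendsto (fun τ => Real.exp (ρ * τ) • deriv Λ τ) atTop (𝓝 Lp)) ∧
  (∃ Lm : Fin d → ℝ, Tendsto (fun τ => Real.exp (-ρ * τ) • deriv Λ τ) atBot (𝓝 Lm))

/-- The compactified input `Λ_α : [-1,1] → ℝ^d`, equal to `Λ ∘ h_α` on `(-1,1)` and to the
future/past limits `lp`, `lm` at `s = 1`, `s = -1` respectively. -/
noncomputable def compInput {d : ℕ} (Λ : ℝ → Fin d → ℝ) (lp lm : Fin d → ℝ)
    (α s : ℝ) : Fin d → ℝ :=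
  if s = 1 then lp else if s = -1 then lm else Λ (hcomp α s)

/-!
Write `h = hcomp α`. On `(-1, 1)` one has `exp (α h(s)) = (1 + s) / (1 - s)`, so that
`h'(s) = 2 / (α (1 + s)²) * exp (α h(s))` and hence
`(Λ ∘ h)'(s) = 2 / (α (1 + s)²) • (exp (α τ) • Λ'(τ))` at `τ = h(s)`. The blow-up of `h'` at `1`
is thus exactly the weight `exp (α τ)`, which the decay of `Λ'` absorbs as soon as `α ≤ ρ`. The
derivative then has a limit at `1`, and by the reflection `τ ↦ -τ` also at `-1`; a continuous
function on `[-1, 1]` whose derivative on `(-1, 1)` is continuous and has limits at the endpoints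
is C¹ up to the boundary.
-/

section

open Set Function

variable {E : Type*} [NormedAddCommGroup E] [NormedSpace ℝ E]

theorem contDiffOn_one_Icc_of_tendsto_deriv {f : ℝ → E} {a b : ℝ} {da db : E} (hab : a < b)
    (hf : ContDiffOn ℝ 1 f (Ioo a b)) (hfc : ContinuousOn f (Icc a b))
    (hda : Tendsto (deriv f) (𝓝[>] a) (𝓝 da)) (hdb : Tendsto (deriv f) (𝓝[<] b) (𝓝 db)) :
    ContDiffOn ℝ 1 f (Icc a b) := by
  have hdiff : DifferentiableOn ℝ f (Ioo a b) := hf.differentiableOn one_ne_zero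
  have hunique : UniqueDiffOn ℝ (Icc a b) := uniqueDiffOn_Icc hab
  let g := extendFrom (Ioo a b) (deriv f)
  have hga : g a = da := eq_lim_at_left_extendFrom_Ioo hab hda
  have hgb : g b = db := eq_lim_at_right_extendFrom_Ioo hab hdb
  have hderiv : ContinuousOn (deriv f) (Ioo a b) :=
    hf.continuousOn_deriv_of_isOpen isOpen_Ioo le_rfl
  have hg : ContinuousOn g (Icc a b) :=
    continuousOn_Icc_extendFrom_Ioo hderiv hda hdb
  have hfg : ∀ s ∈ Icc a b, HasDerivWithinAt f (g s) (Icc a b) s := by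
    intro s hs
    have hcont : ContinuousWithinAt f (Ioo a b) s := (hfc s hs).mono Ioo_subset_Icc_self
    rcases eq_endpoints_or_mem_Ioo_of_mem_Icc hs with rfl | rfl | hs
    · rw [hga]
      exact (hasDerivWithinAt_Ici_of_tendsto_deriv hdiff hcont (Ioo_mem_nhdsGT hab) hda).mono
        Icc_subset_Ici_self
    · rw [hgb]
      exact (hasDerivWithinAt_Iic_of_tendsto_deriv hdiff hcont (Ioo_mem_nhdsLT hab) hdb).mono
        Icc_subset_Iic_self
    · have hgs : g s = deriv f s := extendFrom_extends hderiv s hs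
      rw [hgs]
      exact (hdiff.differentiableAt (isOpen_Ioo.mem_nhds hs)).hasDerivAt.hasDerivWithinAt
  rw [contDiffOn_one_iff_derivWithin hunique]
  exact ⟨fun s hs => (hfg s hs).differentiableWithinAt,
    hg.congr fun s hs => (hfg s hs).derivWithin (hunique s hs)⟩

theorem continuousOn_Icc_update_update {X : Type*} [TopologicalSpace X] {f : ℝ → X} {a b : ℝ}
    {ya yb : X} (hab : a < b) (hf : ContinuousOn f (Ioo a b))
    (ha : Tendsto f (𝓝[>] a) (𝓝 ya)) (hb : Tendsto f (𝓝[<] b) (𝓝 yb)) :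
    ContinuousOn (update (update f a ya) b yb) (Icc a b) := by
  have hfa : ContinuousOn (update f a ya) (Ico a b) := by
    rw [continuousOn_update_iff, Ico_sdiff_left, nhdsWithin_Ioo_eq_nhdsGT hab]
    exact ⟨hf, fun _ => ha⟩
  rw [continuousOn_update_iff, Icc_sdiff_right, nhdsWithin_Ico_eq_nhdsLT hab]
  refine ⟨hfa, fun _ => hb.congr' ?_⟩
  filter_upwards [Ioo_mem_nhdsLT hab] with s hs using (update_of_ne hs.1.ne' ya f).symm

theorem contDiffOn_one_Icc_update_update {f : ℝ → E} {a b : ℝ} {ya yb da db : E} (hab : a < b)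
    (hf : ContDiffOn ℝ 1 f (Ioo a b))
    (ha : Tendsto f (𝓝[>] a) (𝓝 ya)) (hb : Tendsto f (𝓝[<] b) (𝓝 yb))
    (hda : Tendsto (deriv f) (𝓝[>] a) (𝓝 da)) (hdb : Tendsto (deriv f) (𝓝[<] b) (𝓝 db)) :
    ContDiffOn ℝ 1 (update (update f a ya) b yb) (Icc a b) := by
  have heq : EqOn (update (update f a ya) b yb) f (Ioo a b) := fun s hs => by
    rw [update_of_ne hs.2.ne, update_of_ne hs.1.ne']
  have hderiv : EqOn (deriv f) (deriv (update (update f a ya) b yb)) (Ioo a b) :=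
    (heq.deriv isOpen_Ioo).symm
  exact contDiffOn_one_Icc_of_tendsto_deriv hab (hf.congr heq)
    (continuousOn_Icc_update_update hab hf.continuousOn ha hb)
    (hda.congr' (hderiv.eventuallyEq_of_mem (Ioo_mem_nhdsGT hab)))
    (hdb.congr' (hderiv.eventuallyEq_of_mem (Ioo_mem_nhdsLT hab)))

theorem exists_tendsto_exp_mul_smul_of_le {f : ℝ → E} {α ρ : ℝ} (hαρ : α ≤ ρ)
    (hf : ∃ L, Tendsto (fun τ => Real.exp (ρ * τ) • f τ) atTop (𝓝 L)) :
    ∃ L, Tendsto (fun τ => Real.exp (α * τ) • f τ) atTop (𝓝 L) := by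
  rcases hαρ.eq_or_lt with rfl | hlt
  · exact hf
  obtain ⟨L, hL⟩ := hf
  have hdecay : Tendsto (fun τ => Real.exp ((α - ρ) * τ)) atTop (𝓝 0) :=
    Real.tendsto_exp_atBot.comp (tendsto_id.const_mul_atTop_of_neg (sub_neg.2 hlt))
  refine ⟨(0 : ℝ) • L, (hdecay.smul hL).congr fun τ => ?_⟩
  rw [smul_smul, ← Real.exp_add, ← add_mul, sub_add_cancel]

theorem hcomp_neg (α s : ℝ) : hcomp α (-s) = -hcomp α s := by
  rw [hcomp, hcomp, ← mul_neg, ← Real.log_inv, inv_div, sub_neg_eq_add, ← sub_eq_add_neg]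

theorem exp_mul_hcomp {α s : ℝ} (hα : α ≠ 0) (hs : s ∈ Ioo (-1) 1) :
    Real.exp (α * hcomp α s) = (1 + s) / (1 - s) := by
  have hpos : 0 < (1 + s) / (1 - s) := div_pos (by linarith [hs.1]) (by linarith [hs.2])
  rw [hcomp, ← mul_assoc, mul_one_div_cancel hα, one_mul, Real.exp_log hpos]

theorem hasDerivAt_hcomp (α : ℝ) {s : ℝ} (hs : s ∈ Ioo (-1) 1) :
    HasDerivAt (hcomp α) (1 / α * (2 / ((1 + s) * (1 - s)))) s := by
  have hadd : 1 + s ≠ 0 := by linarith [hs.1]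
  have hsub : 1 - s ≠ 0 := by linarith [hs.2]
  have hratio : HasDerivAt (fun t : ℝ => (1 + t) / (1 - t)) (2 / (1 - s) ^ 2) s :=
    (((hasDerivAt_id' s).const_add 1).fun_div ((hasDerivAt_id' s).const_sub 1) hsub).congr_deriv
      (by ring)
  refine ((hratio.log (div_ne_zero hadd hsub)).const_mul (1 / α)).congr_deriv ?_
  field_simp

theorem contDiffOn_hcomp (α : ℝ) {n : WithTop ℕ∞} : ContDiffOn ℝ n (hcomp α) (Ioo (-1) 1) := by
  have hadd : ∀ s ∈ Ioo (-1 : ℝ) 1, 1 + s ≠ 0 := fun s hs => by linarith [hs.1]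
  have hsub : ∀ s ∈ Ioo (-1 : ℝ) 1, 1 - s ≠ 0 := fun s hs => by linarith [hs.2]
  exact contDiffOn_const.mul <|
    ((contDiffOn_const.add contDiffOn_id).div (contDiffOn_const.sub contDiffOn_id) hsub).log
      fun s hs => div_ne_zero (hadd s hs) (hsub s hs)

theorem tendsto_hcomp_nhdsLT_one {α : ℝ} (hα : 0 < α) :
    Tendsto (hcomp α) (𝓝[<] 1) atTop := by
  have hnum : Tendsto (fun s : ℝ => 1 + s) (𝓝[<] 1) (𝓝 (1 + 1)) :=
    (tendsto_id.const_add 1).mono_left nhdsWithin_le_nhds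
  have hden : Tendsto (fun s : ℝ => 1 - s) (𝓝[<] 1) (𝓝[>] 0) := by
    refine tendsto_nhdsWithin_iff.2 ⟨?_, eventually_mem_nhdsWithin.mono fun s hs => ?_⟩
    · have hcont : Continuous (fun s : ℝ => 1 - s) := by fun_prop
      exact (hcont.tendsto' 1 0 (sub_self 1)).mono_left nhdsWithin_le_nhds
    · exact mem_Ioi.2 (sub_pos.2 hs)
  have hratio : Tendsto (fun s : ℝ => (1 + s) / (1 - s)) (𝓝[<] 1) atTop := by
    simpa only [div_eq_mul_inv, comp_apply] using
      hnum.pos_mul_atTop (by norm_num) (tendsto_inv_nhdsGT_zero.comp hden)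
  exact (Real.tendsto_log_atTop.comp hratio).const_mul_atTop (one_div_pos.2 hα)

theorem tendsto_hcomp_nhdsGT_neg_one {α : ℝ} (hα : 0 < α) :
    Tendsto (hcomp α) (𝓝[>] (-1)) atBot := by
  have hreflect : Tendsto (fun s => hcomp α (-s)) (𝓝[>] (-1)) atTop :=
    (tendsto_hcomp_nhdsLT_one hα).comp tendsto_neg_nhdsGT_neg
  simpa only [hcomp_neg, tendsto_neg_atTop_iff] using hreflect

theorem deriv_comp_hcomp {Λ : ℝ → E} (hΛ : Differentiable ℝ Λ) {α s : ℝ} (hα : α ≠ 0)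
    (hs : s ∈ Ioo (-1) 1) :
    deriv (Λ ∘ hcomp α) s =
      (2 / (α * (1 + s) ^ 2)) • Real.exp (α * hcomp α s) • deriv Λ (hcomp α s) := by
  have hadd : 1 + s ≠ 0 := by linarith [hs.1]
  have hsub : 1 - s ≠ 0 := by linarith [hs.2]
  rw [((hΛ _).hasDerivAt.scomp s (hasDerivAt_hcomp α hs)).deriv, exp_mul_hcomp hα hs, smul_smul]
  congr 1
  field_simp

theorem exists_tendsto_deriv_comp_hcomp_nhdsLT_one {Λ : ℝ → E} (hΛ : Differentiable ℝ Λ)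
    {α ρ : ℝ} (hα : α ∈ Ioc 0 ρ)
    (hdecay : ∃ L, Tendsto (fun τ => Real.exp (ρ * τ) • deriv Λ τ) atTop (𝓝 L)) :
    ∃ D, Tendsto (deriv (Λ ∘ hcomp α)) (𝓝[<] 1) (𝓝 D) := by
  obtain ⟨L, hL⟩ := exists_tendsto_exp_mul_smul_of_le hα.2 hdecay
  have hcoeff : Tendsto (fun s : ℝ => 2 / (α * (1 + s) ^ 2)) (𝓝[<] 1)
      (𝓝 (2 / (α * (1 + 1) ^ 2))) := by
    have hne : α * (1 + 1) ^ 2 ≠ 0 := mul_ne_zero hα.1.ne' (by norm_num)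
    have hcont : ContinuousAt (fun s : ℝ => 2 / (α * (1 + s) ^ 2)) 1 := by
      fun_prop (disch := exact hne)
    exact hcont.tendsto.mono_left nhdsWithin_le_nhds
  refine ⟨_, (hcoeff.smul (hL.comp (tendsto_hcomp_nhdsLT_one hα.1))).congr' ?_⟩
  filter_upwards [Ioo_mem_nhdsLT (neg_lt_self one_pos)] with s hs
    using (deriv_comp_hcomp hΛ hα.1.ne' hs).symm

theorem exists_tendsto_deriv_comp_hcomp_nhdsGT_neg_one {Λ : ℝ → E} (hΛ : Differentiable ℝ Λ)
    {α ρ : ℝ} (hα : α ∈ Ioc 0 ρ)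
    (hdecay : ∃ L, Tendsto (fun τ => Real.exp (-ρ * τ) • deriv Λ τ) atBot (𝓝 L)) :
    ∃ D, Tendsto (deriv (Λ ∘ hcomp α)) (𝓝[>] (-1)) (𝓝 D) := by
  let Γ : ℝ → E := fun τ => Λ (-τ)
  have hΓ : ∃ L, Tendsto (fun τ => Real.exp (ρ * τ) • deriv Γ τ) atTop (𝓝 L) := by
    obtain ⟨L, hL⟩ := hdecay
    refine ⟨-L, (hL.comp tendsto_neg_atTop_atBot).neg.congr fun τ => ?_⟩
    simp only [Function.comp_apply, Γ, deriv_comp_neg, neg_mul_neg, smul_neg]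
  obtain ⟨D, hD⟩ :=
    exists_tendsto_deriv_comp_hcomp_nhdsLT_one (Λ := Γ) (hΛ.comp differentiable_neg) hα hΓ
  have hreflect : Λ ∘ hcomp α = fun s => (Γ ∘ hcomp α) (-s) := by
    funext s
    simp only [Function.comp_apply, Γ, hcomp_neg, neg_neg]
  refine ⟨-D, (hD.comp tendsto_neg_nhdsGT_neg).neg.congr fun s => ?_⟩
  rw [hreflect, deriv_comp_neg, Function.comp_apply]

theorem compInput_eq_update_update {d : ℕ} (Λ : ℝ → Fin d → ℝ) (lp lm : Fin d → ℝ) (α : ℝ) :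
    compInput Λ lp lm α = update (update (Λ ∘ hcomp α) (-1) lm) 1 lp := by
  funext s
  simp only [compInput, update_apply, comp_apply]

theorem stmt0_general {Λ : ℝ → E} (hΛ : ContDiff ℝ 1 Λ) {lp lm : E}
    (hp : Tendsto Λ atTop (𝓝 lp)) (hm : Tendsto Λ atBot (𝓝 lm)) {ρ : ℝ}
    (hdp : ∃ L, Tendsto (fun τ => Real.exp (ρ * τ) • deriv Λ τ) atTop (𝓝 L))
    (hdm : ∃ L, Tendsto (fun τ => Real.exp (-ρ * τ) • deriv Λ τ) atBot (𝓝 L))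
    {α : ℝ} (hα : α ∈ Ioc 0 ρ) :
    ContDiffOn ℝ 1 (update (update (Λ ∘ hcomp α) (-1) lm) 1 lp) (Icc (-1) 1) := by
  have hdiff : Differentiable ℝ Λ := hΛ.differentiable one_ne_zero
  obtain ⟨Dp, hDp⟩ := exists_tendsto_deriv_comp_hcomp_nhdsLT_one hdiff hα hdp
  obtain ⟨Dm, hDm⟩ := exists_tendsto_deriv_comp_hcomp_nhdsGT_neg_one hdiff hα hdm
  exact contDiffOn_one_Icc_update_update (neg_lt_self one_pos)
    (hΛ.comp_contDiffOn (contDiffOn_hcomp α))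
    (hm.comp (tendsto_hcomp_nhdsGT_neg_one hα.1)) (hp.comp (tendsto_hcomp_nhdsLT_one hα.1))
    hDm hDp

end

/-- If `Λ` is C¹ and exponentially bi-asymptotically constant with decay
coefficient `ρ > 0`, with limits `lp` at `+∞` and `lm` at `-∞`, then for every `α ∈ (0,ρ]`
the compactified input `Λ_α` is continuously differentiable on `[-1,1]`. -/
theorem stmt0 {d : ℕ} (Λ : ℝ → Fin d → ℝ) (ρ : ℝ) (hρ : 0 < ρ)
    (hΛ : ContDiff ℝ 1 Λ) (hbac : ExpBiAsympConst Λ ρ)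
    (lp lm : Fin d → ℝ)
    (hp : Tendsto Λ atTop (𝓝 lp)) (hm : Tendsto Λ atBot (𝓝 lm)) :
    ∀ α ∈ Set.Ioc (0 : ℝ) ρ,
      ContDiffOn ℝ 1 (compInput Λ lp lm α) (Set.Icc (-1) 1) := by
  intro α hα
  rw [compInput_eq_update_update]
  exact stmt0_general hΛ hp hm hbac.1 hbac.2 hα
end

section
/- Let f : ℝⁿ × ℝ^d → ℝⁿ and Λ : ℝ → ℝ^d be continuous, and fix r > 0 and α > 0. A differentiable function x : ℝ → ℝⁿ satisfies the nonautonomous equation x'(τ) = f(x(τ), Λ(τ))/r for all τ ∈ ℝ if and only if the curve τ ↦ (x(τ), g_α(τ)) is a solution of the compactified system, i.e. it is differentiable and satisfies d/dτ (x(τ), s(τ)) = ( f(x(τ), Λ_α(s(τ)))/r , α(1 − s(τ)²)/2 ) for all τ ∈ ℝ, where s(τ) = g_α(τ). -/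
open Filter Topology

/-!
Since `h_α` is a left inverse of `g_α`, rewriting time as `h_α(s)` along `s = g_α(τ)` gives back
the nonautonomous vector field. The additional scalar equation is the Riccati equation
`tanh' = 1 - tanh²` at the rescaled time `ατ/2`, so `g_α` solves it whatever `x` is.
-/

section Prod

variable {𝕜 E F : Type*} [NontriviallyNormedField 𝕜] [NormedAddCommGroup E] [NormedSpace 𝕜 E]
  [NormedAddCommGroup F] [NormedSpace 𝕜 F]

theorem hasDerivAt_prodMk_iff {x : 𝕜 → E} {s : 𝕜 → F} {x' : E} {s' : F} {t : 𝕜} :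
    HasDerivAt (fun σ => (x σ, s σ)) (x', s') t ↔ HasDerivAt x x' t ∧ HasDerivAt s s' t :=
  ⟨fun h => ⟨h.fst, h.snd⟩, fun h => h.1.prodMk h.2⟩

end Prod

theorem hasDerivAt_tanh (t : ℝ) : HasDerivAt Real.tanh (1 - Real.tanh t ^ 2) t := by
  have tanh_eq_div : Real.tanh = Real.sinh / Real.cosh := funext Real.tanh_eq_sinh_div_cosh
  have cosh_ne_zero : Real.cosh t ≠ 0 := (Real.cosh_pos t).ne'
  rw [tanh_eq_div]
  refine ((Real.hasDerivAt_sinh t).div (Real.hasDerivAt_cosh t) cosh_ne_zero).congr_deriv ?_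
  rw [Pi.div_apply]
  field_simp

theorem hasDerivAt_gcomp (α τ : ℝ) :
    HasDerivAt (gcomp α) (α * (1 - gcomp α τ ^ 2) / 2) τ := by
  have hasDerivAt_arg : HasDerivAt (fun σ => α * σ / 2) (α / 2) τ := by
    simpa only [mul_one, id] using ((hasDerivAt_id τ).const_mul α).div_const 2
  refine ((hasDerivAt_tanh (α * τ / 2)).comp τ hasDerivAt_arg).congr_deriv ?_
  rw [gcomp]
  ring

theorem gcomp_mem_Ioo (α τ : ℝ) : gcomp α τ ∈ Set.Ioo (-1) 1 :=
  ⟨Real.neg_one_lt_tanh _, Real.tanh_lt_one _⟩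

theorem hcomp_eq_artanh {s : ℝ} (hs : s ∈ Set.Icc (-1) 1) (α : ℝ) :
    hcomp α s = 2 / α * Real.artanh s := by
  rw [hcomp, Real.artanh_eq_half_log hs]
  ring

theorem leftInverse_hcomp_gcomp {α : ℝ} (hα : α ≠ 0) :
    Function.LeftInverse (hcomp α) (gcomp α) := fun τ => by
  rw [hcomp_eq_artanh (Set.Ioo_subset_Icc_self (gcomp_mem_Ioo α τ)), gcomp, Real.artanh_tanh]
  field_simp

theorem stmt11_general {E : Type*} [NormedAddCommGroup E] [NormedSpace ℝ E] {α : ℝ} (hα : α ≠ 0)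
    (v : ℝ → E → E) (x : ℝ → E) (τ : ℝ) :
    HasDerivAt x (v τ (x τ)) τ ↔
      HasDerivAt (fun σ => (x σ, gcomp α σ))
        (v (hcomp α (gcomp α τ)) (x τ), α * (1 - gcomp α τ ^ 2) / 2) τ := by
  rw [leftInverse_hcomp_gcomp hα τ, hasDerivAt_prodMk_iff,
    and_iff_left (hasDerivAt_gcomp α τ)]

/-- For continuous `f`, `Λ` and fixed `r, α > 0`, a differentiable
`x : ℝ → ℝⁿ` satisfies `x'(τ) = f(x(τ),Λ(τ))/r` for all `τ` iff the curve
`τ ↦ (x(τ), g_α(τ))` solves the compactified system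
`(x,s)' = (f(x, Λ(h_α(s)))/r, α(1-s²)/2)`. -/
theorem stmt11 {n d : ℕ} (f : (Fin n → ℝ) × (Fin d → ℝ) → Fin n → ℝ)
    (hf : Continuous f)
    (Λ : ℝ → Fin d → ℝ) (hΛ : Continuous Λ)
    (r α : ℝ) (hr : 0 < r) (hα : 0 < α)
    (x : ℝ → Fin n → ℝ) (hx : Differentiable ℝ x) :
    (∀ τ : ℝ, HasDerivAt x (r⁻¹ • f (x τ, Λ τ)) τ) ↔
    (∀ τ : ℝ, HasDerivAt (fun σ => (x σ, gcomp α σ))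
        ((r⁻¹ • f (x τ, Λ (hcomp α (gcomp α τ))),
          α * (1 - (gcomp α τ) ^ 2) / 2)) τ) :=
  forall_congr' (stmt11_general hα.ne' (fun τ y => r⁻¹ • f (y, Λ τ)) x)
end
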